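/- arXiv:2109.00880 — 3 statements merged into one kernel-verified Lean document; each statement's English description precedes it below -/
import Mathlib

section
/- For all α > 0, β > 0 and 0 < ν < 1, the ν-Birnbaum–Saunders density integrates to one: ∫₀^∞ (ν/(αβ√(2π))) · exp(−(1/(2α²))((t/β)^{2ν} + (β/t)^{2ν} − 2)) · ((t/β)^{ν−1} + (β/t)^{ν+1}) dt = 1. -/
open Real Filter Set MeasureTheory

theorem nuBS_pdf_integral_eq_one (α β ν : ℝ) (hα : 0 < α) (hβ : 0 < β)
    (hν0 : 0 < ν) (hν1 : ν < 1) :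
    ∫ t in Set.Ioi (0 : ℝ),
      (ν / (α * β * Real.sqrt (2 * Real.pi))) *
        Real.exp (-(1 / (2 * α ^ 2)) * ((t / β) ^ (2 * ν) + (β / t) ^ (2 * ν) - 2)) *
        ((t / β) ^ (ν - 1) + (β / t) ^ (ν + 1)) = 1 := by
  have hd : ∀ t ∈ Set.Ioi (0 : ℝ), HasDerivWithinAt
      (fun t => (2 / α) * Real.sinh (ν * Real.log (t / β)))
      ((2 / α) * (Real.cosh (ν * Real.log (t / β)) * (ν * ((1 / β) / (t / β))))) (Set.Ioi 0) t := by
    intro t ht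
    have ht : 0 < t := ht
    have h1 : HasDerivAt (fun t : ℝ => t / β) (1 / β) t := (hasDerivAt_id t).div_const β
    exact ((((h1.log (by positivity)).const_mul ν).sinh).const_mul (2 / α)).hasDerivWithinAt
  have hinj : Set.InjOn (fun t => (2 / α) * Real.sinh (ν * Real.log (t / β))) (Set.Ioi 0) := by
    intro x hx y hy h
    have hx : 0 < x := hx
    have hy : 0 < y := hy
    have h2 := Real.sinh_injective (mul_left_cancel₀ (by positivity : (2 / α) ≠ 0) h)
    have h3 := Real.log_injOn_pos (Set.mem_Ioi.2 (by positivity)) (Set.mem_Ioi.2 (by positivity))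
      (mul_left_cancel₀ hν0.ne' h2)
    field_simp at h3
    exact h3
  have himg : (fun t => (2 / α) * Real.sinh (ν * Real.log (t / β))) '' (Set.Ioi 0)
      = Set.univ := by
    rw [Set.eq_univ_iff_forall]
    intro y
    refine ⟨β * Real.exp (Real.arsinh (α / 2 * y) / ν), Set.mem_Ioi.2 (by positivity), ?_⟩
    have h1 : β * Real.exp (Real.arsinh (α / 2 * y) / ν) / β
        = Real.exp (Real.arsinh (α / 2 * y) / ν) := by field_simp
    simp only [h1, Real.log_exp]
    rw [mul_div_cancel₀ _ hν0.ne', Real.sinh_arsinh]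
    field_simp
  have key := integral_image_eq_integral_abs_deriv_smul measurableSet_Ioi hd hinj
    (fun x => (1 / Real.sqrt (2 * Real.pi)) * Real.exp (-(1 / 2) * x ^ 2))
  rw [himg, Measure.restrict_univ, integral_const_mul, integral_gaussian] at key
  have hL : 1 / Real.sqrt (2 * Real.pi) * Real.sqrt (Real.pi / (1 / 2)) = 1 := by
    rw [show Real.pi / (1 / 2) = 2 * Real.pi by ring]
    have : Real.sqrt (2 * Real.pi) ≠ 0 := by positivity
    field_simp
  rw [hL] at key
  refine Eq.trans ?_ key.symm
  refine setIntegral_congr_fun measurableSet_Ioi ?_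
  intro t ht
  have ht : 0 < t := ht
  obtain ⟨x, hx⟩ : ∃ x, x = Real.log (t / β) := ⟨_, rfl⟩
  have htx : t / β = Real.exp x := by rw [hx, Real.exp_log (by positivity)]
  have htx' : β / t = Real.exp (-x) := by rw [Real.exp_neg, ← htx, inv_div]
  have hs : Real.sqrt (2 * Real.pi) ≠ 0 := by positivity
  have hc := Real.cosh_pos (ν * x)
  simp only [smul_eq_mul, htx, htx', Real.log_exp]
  rw [abs_of_pos (by positivity)]
  simp only [← Real.exp_mul]
  have e1 : -(1 / (2 * α ^ 2)) * (Real.exp (x * (2 * ν)) + Real.exp (-x * (2 * ν)) - 2)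
      = -(1 / 2) * (2 / α * Real.sinh (ν * x)) ^ 2 := by
    have a1 : Real.exp (x * (2 * ν)) = Real.exp (ν * x) ^ 2 := by
      rw [← Real.exp_nat_mul]; congr 1; push_cast; ring
    have a2 : Real.exp (-x * (2 * ν)) = Real.exp (-(ν * x)) ^ 2 := by
      rw [← Real.exp_nat_mul]; congr 1; push_cast; ring
    have a3 : Real.exp (ν * x) * Real.exp (-(ν * x)) = 1 := by
      rw [← Real.exp_add]; simp
    rw [a1, a2, Real.sinh_eq]
    field_simp
    linear_combination (-2) * a3
  have e2 : Real.exp (x * (ν - 1)) + Real.exp (-x * (ν + 1))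
      = 2 * Real.cosh (ν * x) / Real.exp x := by
    rw [Real.cosh_eq, eq_div_iff (Real.exp_pos x).ne', add_mul, ← Real.exp_add, ← Real.exp_add]
    ring_nf
  rw [e1, e2]
  field_simp
end

section
/- Let α₁, α₂, β₁, β₂ > 0, 0 < ν₁, ν₂ < 1 and −1 < ρ < 1. For every t₁ > 0, integrating the bivariate ν-BS joint density over t₂ ∈ (0,∞) yields the univariate ν-BS density: ∫₀^∞ f_{T₁,T₂}(t₁, t₂) dt₂ = (ν₁/(α₁β₁√(2π))) · exp(−(1/(2α₁²))((t₁/β₁)^{2ν₁} + (β₁/t₁)^{2ν₁} − 2)) · ((t₁/β₁)^{ν₁−1} + (β₁/t₁)^{ν₁+1}). -/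
open Real Filter Set MeasureTheory

lemma nuBS_hasDerivAt (β ν t : ℝ) (hβ : 0 < β) (ht : 0 < t) :
    HasDerivAt (fun t : ℝ => (t / β) ^ ν - (β / t) ^ ν)
      (ν / β * ((t / β) ^ (ν - 1) + (β / t) ^ (ν + 1))) t := by
  have h1 : HasDerivAt (fun t : ℝ => t / β) (1 / β) t := (hasDerivAt_id t).div_const β
  have h2 : HasDerivAt (fun t : ℝ => β / t) (-β / t ^ 2) t := by
    have := (hasDerivAt_inv ht.ne').const_mul β
    refine (this.congr_deriv (by ring)).congr_of_eventuallyEq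
      (Eventually.of_forall fun x => div_eq_mul_inv β x)
  have h3 := (h1.rpow_const (p := ν) (Or.inl (by positivity))).sub
    (h2.rpow_const (p := ν) (Or.inl (by positivity)))
  refine HasDerivAt.congr_deriv h3 ?_
  have e : (β / t) ^ (ν + 1) = (β / t) ^ (ν - 1) * (β / t) ^ 2 := by
    rw [← Real.rpow_natCast, ← Real.rpow_add (by positivity)]
    congr 1
    push_cast
    ring
  rw [e]
  field_simp
  ring

lemma nuBS_strictMono (β ν : ℝ) (hβ : 0 < β) (hν : 0 < ν) :
    StrictMonoOn (fun t : ℝ => (t / β) ^ ν - (β / t) ^ ν) (Ioi 0) := by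
  intro x hx y hy hxy
  have hx : 0 < x := hx
  have hy : 0 < y := hy
  have h1 : (x / β) ^ ν < (y / β) ^ ν :=
    Real.rpow_lt_rpow (by positivity) (by gcongr) hν
  have h2 : (β / y) ^ ν < (β / x) ^ ν :=
    Real.rpow_lt_rpow (by positivity) (by gcongr) hν
  simp only
  linarith

lemma nuBS_image (β ν : ℝ) (hβ : 0 < β) (hν : 0 < ν) :
    (fun t : ℝ => (t / β) ^ ν - (β / t) ^ ν) '' (Ioi 0) = univ := by
  refine eq_univ_of_forall fun y => ?_
  have hs : √(y ^ 2 + 4) ^ 2 = y ^ 2 + 4 := Real.sq_sqrt (by positivity)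
  have hlt : -y < √(y ^ 2 + 4) := by
    apply Real.lt_sqrt_of_sq_lt
    nlinarith
  obtain ⟨u, hu⟩ : ∃ u, u = (y + √(y ^ 2 + 4)) / 2 := ⟨_, rfl⟩
  have hu0 : 0 < u := by linarith
  have huy : u - u⁻¹ = y := by
    field_simp
    rw [hu]
    nlinarith
  have hp : 0 < u ^ (ν⁻¹) := Real.rpow_pos_of_pos hu0 _
  refine ⟨β * u ^ (ν⁻¹), mul_pos hβ hp, ?_⟩
  have e1 : β * u ^ (ν⁻¹) / β = u ^ (ν⁻¹) := by field_simp
  have e2 : β / (β * u ^ (ν⁻¹)) = (u ^ (ν⁻¹))⁻¹ := by field_simp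
  simp only
  rw [e1, e2, Real.inv_rpow hp.le, ← Real.rpow_mul hu0.le, inv_mul_cancel₀ hν.ne', Real.rpow_one,
    huy]

lemma nuBS_integral (β ν : ℝ) (hβ : 0 < β) (hν : 0 < ν) (g : ℝ → ℝ) :
    ∫ t in Ioi (0 : ℝ), ν / β * ((t / β) ^ (ν - 1) + (β / t) ^ (ν + 1)) *
      g ((t / β) ^ ν - (β / t) ^ ν) = ∫ y, g y := by
  have h := integral_image_eq_integral_abs_deriv_smul (measurableSet_Ioi (a := (0 : ℝ)))
    (fun t ht => (nuBS_hasDerivAt β ν t hβ ht).hasDerivWithinAt)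
    (nuBS_strictMono β ν hβ hν).injOn g
  rw [nuBS_image β ν hβ hν, Measure.restrict_univ] at h
  rw [h]
  refine setIntegral_congr_fun measurableSet_Ioi fun t ht => ?_
  have ht : 0 < t := ht
  have : 0 ≤ ν / β * ((t / β) ^ (ν - 1) + (β / t) ^ (ν + 1)) := by positivity
  simp only [abs_of_nonneg this, smul_eq_mul]

theorem bvNuBS_density_marginal (α₁ β₁ ν₁ α₂ β₂ ν₂ ρ : ℝ)
    (hα₁ : 0 < α₁) (hβ₁ : 0 < β₁) (hν₁0 : 0 < ν₁) (hν₁1 : ν₁ < 1)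
    (hα₂ : 0 < α₂) (hβ₂ : 0 < β₂) (hν₂0 : 0 < ν₂) (hν₂1 : ν₂ < 1)
    (hρ1 : -1 < ρ) (hρ2 : ρ < 1) (t₁ : ℝ) (ht₁ : 0 < t₁) :
    ∫ t₂ in Set.Ioi (0 : ℝ),
      (ν₁ * ν₂ / (2 * Real.pi * α₁ * α₂ * β₁ * β₂ * Real.sqrt (1 - ρ ^ 2))) *
        ((t₁ / β₁) ^ (ν₁ - 1) + (β₁ / t₁) ^ (ν₁ + 1)) *
        ((t₂ / β₂) ^ (ν₂ - 1) + (β₂ / t₂) ^ (ν₂ + 1)) *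
        Real.exp (-(1 / (2 * (1 - ρ ^ 2))) *
          ((1 / α₁ ^ 2) * ((t₁ / β₁) ^ ν₁ - (β₁ / t₁) ^ ν₁) ^ 2 +
            (1 / α₂ ^ 2) * ((t₂ / β₂) ^ ν₂ - (β₂ / t₂) ^ ν₂) ^ 2 -
            (2 * ρ / (α₁ * α₂)) * ((t₁ / β₁) ^ ν₁ - (β₁ / t₁) ^ ν₁) *
              ((t₂ / β₂) ^ ν₂ - (β₂ / t₂) ^ ν₂))) =
      (ν₁ / (α₁ * β₁ * Real.sqrt (2 * Real.pi))) *
        Real.exp (-(1 / (2 * α₁ ^ 2)) * ((t₁ / β₁) ^ (2 * ν₁) + (β₁ / t₁) ^ (2 * ν₁) - 2)) *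
        ((t₁ / β₁) ^ (ν₁ - 1) + (β₁ / t₁) ^ (ν₁ + 1)) := by
  have hr : 0 < 1 - ρ ^ 2 := by nlinarith
  have hsr : 0 < √(1 - ρ ^ 2) := Real.sqrt_pos.2 hr
  have hsp : 0 < √(2 * π) := Real.sqrt_pos.2 (by positivity)
  have hA : (t₁ / β₁) ^ (2 * ν₁) + (β₁ / t₁) ^ (2 * ν₁) - 2
      = ((t₁ / β₁) ^ ν₁ - (β₁ / t₁) ^ ν₁) ^ 2 := by
    have h1 : (t₁ / β₁) ^ (2 * ν₁) = ((t₁ / β₁) ^ ν₁) ^ 2 := by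
      rw [mul_comm, Real.rpow_mul (by positivity), Real.rpow_two]
    have h2 : (β₁ / t₁) ^ (2 * ν₁) = ((β₁ / t₁) ^ ν₁) ^ 2 := by
      rw [mul_comm, Real.rpow_mul (by positivity), Real.rpow_two]
    have h3 : (t₁ / β₁) ^ ν₁ * (β₁ / t₁) ^ ν₁ = 1 := by
      rw [← Real.mul_rpow (by positivity) (by positivity)]
      have : t₁ / β₁ * (β₁ / t₁) = 1 := by field_simp
      rw [this, Real.one_rpow]
    rw [h1, h2]
    linear_combination 2 * h3
  rw [hA]
  generalize (t₁ / β₁) ^ ν₁ - (β₁ / t₁) ^ ν₁ = a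
  generalize (t₁ / β₁) ^ (ν₁ - 1) + (β₁ / t₁) ^ (ν₁ + 1) = k
  obtain ⟨C, hC⟩ : ∃ C, C = ν₁ / (2 * π * α₁ * α₂ * β₁ * √(1 - ρ ^ 2)) * k *
    Real.exp (-(1 / (2 * α₁ ^ 2)) * a ^ 2) := ⟨_, rfl⟩
  obtain ⟨b, hb⟩ : ∃ b, b = 1 / (2 * (1 - ρ ^ 2) * α₂ ^ 2) := ⟨_, rfl⟩
  have key := nuBS_integral β₂ ν₂ hβ₂ hν₂0
    (fun y => C * Real.exp (-b * (y - ρ * α₂ * a / α₁) ^ 2))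
  rw [integral_const_mul, integral_sub_right_eq_self (fun y => Real.exp (-b * y ^ 2)),
    integral_gaussian] at key
  have hroot : √(π / b) = α₂ * √(2 * π) * √(1 - ρ ^ 2) := by
    have : π / b = (α₂ * √(2 * π) * √(1 - ρ ^ 2)) ^ 2 := by
      rw [mul_pow, mul_pow, Real.sq_sqrt (by positivity), Real.sq_sqrt hr.le, hb]
      field_simp
    rw [this, Real.sqrt_sq (by positivity)]
  rw [hroot] at key
  trans C * (α₂ * √(2 * π) * √(1 - ρ ^ 2))
  · rw [← key]
    refine setIntegral_congr_fun measurableSet_Ioi fun t ht => ?_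
    generalize (t / β₂) ^ ν₂ - (β₂ / t) ^ ν₂ = y
    generalize (t / β₂) ^ (ν₂ - 1) + (β₂ / t) ^ (ν₂ + 1) = m
    have he : -(1 / (2 * (1 - ρ ^ 2))) * ((1 / α₁ ^ 2) * a ^ 2 + (1 / α₂ ^ 2) * y ^ 2 -
        (2 * ρ / (α₁ * α₂)) * a * y) =
        -(1 / (2 * α₁ ^ 2)) * a ^ 2 + -b * (y - ρ * α₂ * a / α₁) ^ 2 := by
      rw [hb]
      have := hr.ne'
      field_simp
      ring
    rw [he, Real.exp_add, hC]
    field_simp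
  · rw [hC]
    have h2 : √(2 * π) ^ 2 = 2 * π := Real.sq_sqrt (by positivity)
    field_simp
    rw [h2]
    ring
end

section
/- Let α₁, α₂, β₁, β₂ > 0, 0 < ν₁, ν₂ < 1 and −1 < ρ < 1, and let F(t₁, t₂) = Φ₂((1/α₁)((t₁/β₁)^{ν₁} − (β₁/t₁)^{ν₁}), (1/α₂)((t₂/β₂)^{ν₂} − (β₂/t₂)^{ν₂}); ρ). Then for all t₁, t₂ > 0 the mixed second partial derivative ∂²F/∂t₁∂t₂ exists and equals the bivariate ν-BS joint density f_{T₁,T₂}(t₁, t₂). -/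
open Real Filter Set MeasureTheory

/-- The standard bivariate normal density with correlation `ρ`. -/
noncomputable def biNormalPDF (ρ u v : ℝ) : ℝ :=
  (1 / (2 * Real.pi * Real.sqrt (1 - ρ ^ 2))) *
    Real.exp (-(u ^ 2 + v ^ 2 - 2 * ρ * u * v) / (2 * (1 - ρ ^ 2)))

/-- The standard bivariate normal cumulative distribution function with correlation `ρ`. -/
noncomputable def biNormalCDF (ρ u v : ℝ) : ℝ :=
  ∫ s in Set.Iic u, ∫ t in Set.Iic v, biNormalPDF ρ s t

theorem aux_ftc (f : ℝ → ℝ) (hc : Continuous f) (hi : Integrable f) (u : ℝ) :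
    HasDerivAt (fun u => ∫ s in Set.Iic u, f s) (f u) u := by
  have h : (fun u => ∫ s in Set.Iic u, f s)
      = fun u => (∫ s in Set.Iic (0:ℝ), f s) + ∫ s in (0:ℝ)..u, f s := by
    funext u
    rw [← intervalIntegral.integral_Iic_sub_Iic hi.integrableOn hi.integrableOn]
    ring
  rw [h]
  exact (intervalIntegral.integral_hasDerivAt_right (hc.intervalIntegrable _ _)
    (hc.stronglyMeasurableAtFilter _ _) hc.continuousAt).const_add _

theorem aux_bound (ρ : ℝ) (hρ1 : -1 < ρ) (hρ2 : ρ < 1) :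
    ∃ C b : ℝ, 0 < C ∧ 0 < b ∧ ∀ s t, 0 ≤ biNormalPDF ρ s t ∧
      biNormalPDF ρ s t ≤ C * (Real.exp (-b * s ^ 2) * Real.exp (-b * t ^ 2)) := by
  have h1 : 0 < 1 - ρ ^ 2 := by nlinarith
  have hab : |ρ| < 1 := abs_lt.mpr ⟨hρ1, hρ2⟩
  refine ⟨1 / (2 * Real.pi * Real.sqrt (1 - ρ ^ 2)), (1 - |ρ|) / (2 * (1 - ρ ^ 2)),
    by positivity, div_pos (by linarith) (by linarith), fun s t => ⟨?_, ?_⟩⟩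
  · unfold biNormalPDF
    positivity
  · unfold biNormalPDF
    rw [← Real.exp_add]
    refine mul_le_mul_of_nonneg_left (Real.exp_le_exp.mpr ?_) (by positivity)
    have e : -((1 - |ρ|) / (2 * (1 - ρ ^ 2))) * s ^ 2 + -((1 - |ρ|) / (2 * (1 - ρ ^ 2))) * t ^ 2
        = (-((1 - |ρ|) * (s ^ 2 + t ^ 2))) / (2 * (1 - ρ ^ 2)) := by ring
    rw [e]
    refine div_le_div_of_nonneg_right ?_ (by positivity)
    rcases abs_cases ρ with ⟨h, h0⟩ | ⟨h, h0⟩ <;> rw [h]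
    · nlinarith [mul_nonneg h0 (sq_nonneg (s - t))]
    · nlinarith [mul_nonneg (neg_nonneg.mpr h0.le) (sq_nonneg (s + t))]

theorem aux_cont (ρ : ℝ) : Continuous (fun z : ℝ × ℝ => biNormalPDF ρ z.1 z.2) := by
  unfold biNormalPDF
  fun_prop

theorem aux_int (ρ : ℝ) (hρ1 : -1 < ρ) (hρ2 : ρ < 1) :
    Integrable (fun z : ℝ × ℝ => biNormalPDF ρ z.1 z.2) (volume.prod volume) := by
  obtain ⟨C, b, hC, hb, h⟩ := aux_bound ρ hρ1 hρ2
  have hg := integrable_exp_neg_mul_sq hb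
  refine ((hg.mul_prod hg).const_mul C).mono' (aux_cont ρ).aestronglyMeasurable ?_
  filter_upwards with z
  rw [Real.norm_of_nonneg (h z.1 z.2).1]
  exact (h z.1 z.2).2

theorem aux_bound' (ρ : ℝ) (hρ1 : -1 < ρ) (hρ2 : ρ < 1) :
    ∃ g : ℝ → ℝ, Integrable g ∧ ∀ s t, ‖biNormalPDF ρ s t‖ ≤ g s := by
  obtain ⟨C, b, hC, hb, h⟩ := aux_bound ρ hρ1 hρ2
  refine ⟨fun s => C * Real.exp (-b * s ^ 2), (integrable_exp_neg_mul_sq hb).const_mul C,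
    fun s t => ?_⟩
  rw [Real.norm_of_nonneg (h s t).1]
  refine (h s t).2.trans (mul_le_mul_of_nonneg_left ?_ hC.le)
  refine mul_le_of_le_one_right (Real.exp_pos _).le (Real.exp_le_one_iff.mpr ?_)
  nlinarith [mul_nonneg hb.le (sq_nonneg t)]

theorem aux_sec_cont (ρ t : ℝ) : Continuous (fun s => biNormalPDF ρ s t) :=
  (aux_cont ρ).comp (by fun_prop : Continuous fun s : ℝ => (s, t))

theorem aux_sec_int (ρ : ℝ) (hρ1 : -1 < ρ) (hρ2 : ρ < 1) (t : ℝ) :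
    Integrable (fun s => biNormalPDF ρ s t) := by
  obtain ⟨g, hg, h⟩ := aux_bound' ρ hρ1 hρ2
  exact hg.mono' (aux_sec_cont ρ t).aestronglyMeasurable (Eventually.of_forall fun s => h s t)

theorem aux_deriv_v (ρ : ℝ) (hρ1 : -1 < ρ) (hρ2 : ρ < 1) (u v : ℝ) :
    HasDerivAt (fun v => biNormalCDF ρ u v) (∫ s in Set.Iic u, biNormalPDF ρ s v) v := by
  have hi := aux_int ρ hρ1 hρ2
  have hsw : (fun v => biNormalCDF ρ u v)
      = fun v => ∫ t in Set.Iic v, ∫ s in Set.Iic u, biNormalPDF ρ s t := by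
    funext v
    unfold biNormalCDF
    apply integral_integral_swap
    rw [Measure.prod_restrict]
    exact hi.integrableOn
  rw [hsw]
  refine aux_ftc (fun t => ∫ s in Set.Iic u, biNormalPDF ρ s t) ?_ ?_ v
  · obtain ⟨g, hg, h⟩ := aux_bound' ρ hρ1 hρ2
    refine continuous_of_dominated (fun t => (aux_sec_cont ρ t).aestronglyMeasurable)
      (fun t => Eventually.of_forall fun s => h s t) hg.integrableOn
      (Eventually.of_forall fun s => ?_)
    exact (aux_cont ρ).comp (by fun_prop : Continuous fun t : ℝ => (s, t))
  · have h2 : Integrable (fun z : ℝ × ℝ => biNormalPDF ρ z.1 z.2)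
        ((volume.restrict (Set.Iic u)).prod volume) := by
      have := hi.integrableOn (s := Set.Iic u ×ˢ Set.univ)
      rw [IntegrableOn, ← Measure.prod_restrict, Measure.restrict_univ] at this
      exact this
    exact h2.integral_prod_right

theorem aux_arg (α β ν t : ℝ) (hβ : 0 < β) (ht : 0 < t) :
    HasDerivAt (fun t => (1 / α) * ((t / β) ^ ν - (β / t) ^ ν))
      ((1 / α) * (ν / β * ((t / β) ^ (ν - 1) + (β / t) ^ (ν + 1)))) t := by
  have h1 : HasDerivAt (fun t : ℝ => t / β) (1 / β) t := (hasDerivAt_id t).div_const β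
  have h2 : HasDerivAt (fun t : ℝ => β / t) (-β / t ^ 2) t := by
    refine ((hasDerivAt_const t β).div (hasDerivAt_id t) ht.ne').congr_deriv ?_
    simp
  have p1 : 0 < t / β := by positivity
  have p2 : 0 < β / t := by positivity
  have h := ((h1.rpow_const (p := ν) (Or.inl p1.ne')).sub
    (h2.rpow_const (p := ν) (Or.inl p2.ne'))).const_mul (1 / α)
  refine h.congr_deriv ?_
  have e : (β / t) ^ (ν + 1) = (β / t) ^ (ν - 1) * (β / t) ^ 2 := by
    rw [← Real.rpow_natCast, ← Real.rpow_add p2]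
    congr 1
    push_cast
    ring
  rw [e]
  field_simp
  ring

theorem bvNuBS_mixed_partial (α₁ β₁ ν₁ α₂ β₂ ν₂ ρ : ℝ)
    (hα₁ : 0 < α₁) (hβ₁ : 0 < β₁) (hν₁0 : 0 < ν₁) (hν₁1 : ν₁ < 1)
    (hα₂ : 0 < α₂) (hβ₂ : 0 < β₂) (hν₂0 : 0 < ν₂) (hν₂1 : ν₂ < 1)
    (hρ1 : -1 < ρ) (hρ2 : ρ < 1)
    (F : ℝ → ℝ → ℝ)
    (hF : F = fun t₁ t₂ =>
      biNormalCDF ρ ((1 / α₁) * ((t₁ / β₁) ^ ν₁ - (β₁ / t₁) ^ ν₁))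
        ((1 / α₂) * ((t₂ / β₂) ^ ν₂ - (β₂ / t₂) ^ ν₂))) :
    ∀ t₁ t₂ : ℝ, 0 < t₁ → 0 < t₂ →
      HasDerivAt (fun s₁ : ℝ => deriv (fun s₂ : ℝ => F s₁ s₂) t₂)
        ((ν₁ * ν₂ / (2 * Real.pi * α₁ * α₂ * β₁ * β₂ * Real.sqrt (1 - ρ ^ 2))) *
          ((t₁ / β₁) ^ (ν₁ - 1) + (β₁ / t₁) ^ (ν₁ + 1)) *
          ((t₂ / β₂) ^ (ν₂ - 1) + (β₂ / t₂) ^ (ν₂ + 1)) *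
          Real.exp (-(1 / (2 * (1 - ρ ^ 2))) *
            ((1 / α₁ ^ 2) * ((t₁ / β₁) ^ ν₁ - (β₁ / t₁) ^ ν₁) ^ 2 +
              (1 / α₂ ^ 2) * ((t₂ / β₂) ^ ν₂ - (β₂ / t₂) ^ ν₂) ^ 2 -
              (2 * ρ / (α₁ * α₂)) * ((t₁ / β₁) ^ ν₁ - (β₁ / t₁) ^ ν₁) *
                ((t₂ / β₂) ^ ν₂ - (β₂ / t₂) ^ ν₂)))) t₁ := by
  intro t₁ t₂ ht₁ ht₂
  have hd : (fun s₁ : ℝ => deriv (fun s₂ : ℝ => F s₁ s₂) t₂) = fun s₁ =>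
      (∫ s in Set.Iic ((1 / α₁) * ((s₁ / β₁) ^ ν₁ - (β₁ / s₁) ^ ν₁)),
        biNormalPDF ρ s ((1 / α₂) * ((t₂ / β₂) ^ ν₂ - (β₂ / t₂) ^ ν₂))) *
      ((1 / α₂) * (ν₂ / β₂ * ((t₂ / β₂) ^ (ν₂ - 1) + (β₂ / t₂) ^ (ν₂ + 1)))) := by
    funext s₁
    rw [hF]
    exact (HasDerivAt.comp t₂ (aux_deriv_v ρ hρ1 hρ2 _ _) (aux_arg α₂ β₂ ν₂ t₂ hβ₂ ht₂)).deriv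
  rw [hd]
  have h := (HasDerivAt.comp t₁ (aux_ftc _ (aux_sec_cont ρ _) (aux_sec_int ρ hρ1 hρ2
    ((1 / α₂) * ((t₂ / β₂) ^ ν₂ - (β₂ / t₂) ^ ν₂))) _)
    (aux_arg α₁ β₁ ν₁ t₁ hβ₁ ht₁)).mul_const
    ((1 / α₂) * (ν₂ / β₂ * ((t₂ / β₂) ^ (ν₂ - 1) + (β₂ / t₂) ^ (ν₂ + 1))))
  refine h.congr_deriv ?_
  unfold biNormalPDF
  generalize (t₁ / β₁) ^ ν₁ - (β₁ / t₁) ^ ν₁ = A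
  generalize (t₂ / β₂) ^ ν₂ - (β₂ / t₂) ^ ν₂ = B
  generalize (t₁ / β₁) ^ (ν₁ - 1) + (β₁ / t₁) ^ (ν₁ + 1) = P
  generalize (t₂ / β₂) ^ (ν₂ - 1) + (β₂ / t₂) ^ (ν₂ + 1) = Q
  have e : -((1 / α₁ * A) ^ 2 + (1 / α₂ * B) ^ 2 - 2 * ρ * (1 / α₁ * A) * (1 / α₂ * B)) /
      (2 * (1 - ρ ^ 2)) = -(1 / (2 * (1 - ρ ^ 2))) * ((1 / α₁ ^ 2) * A ^ 2 +
        (1 / α₂ ^ 2) * B ^ 2 - (2 * ρ / (α₁ * α₂)) * A * B) := by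
    ring
  rw [e]
  generalize Real.exp _ = E
  ring
end
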